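/- arXiv:1803.09687 — 2 statements merged into one kernel-verified Lean document; each statement's English description precedes it below -/
import Mathlib

section
/- Let K ∈ ℝ, N ∈ (1,∞), let I = (a,b) ⊆ ℝ be an open interval, and let h : I → (0,∞) be locally Lipschitz; let D ⊆ I denote the (full Lebesgue measure) set of points where h is differentiable. Assume that for all x, y ∈ D with x < y one has (log h)′(x) − (log h)′(y) ≥ K·(y − x) + (1/(N−1))·∫_x^y ((log h)′(s))² ds. Then h is a CD(K,N) density on I. -/
open Real MeasureTheory ENNReal

/-- The finite part of the distortion coefficient `σ_{K,N}^{(t)}(θ)`. -/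
noncomputable def sigmaR (K N t θ : ℝ) : ℝ :=
  if 0 < K * θ ^ 2 then
    Real.sin (t * θ * Real.sqrt (K / N)) / Real.sin (θ * Real.sqrt (K / N))
  else if K * θ ^ 2 = 0 ∨ N = 0 then t
  else Real.sinh (t * θ * Real.sqrt (-K / N)) / Real.sinh (θ * Real.sqrt (-K / N))

/-- The distortion coefficient `σ_{K,N}^{(t)}(θ)`, with value `+∞` when `K·θ² ≥ N·π²`. -/
noncomputable def sigmaE (K N t θ : ℝ) : ℝ≥0∞ :=
  if N * Real.pi ^ 2 ≤ K * θ ^ 2 then ⊤ else ENNReal.ofReal (sigmaR K N t θ)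

/-- `h` is a `CD(K,N)` density on the interval `I ⊆ ℝ`: `h` is nonnegative on `I` and
`h((1−t)x₀ + t x₁)^{1/(N−1)} ≥ σ_{K,N−1}^{(1−t)}(|x₁−x₀|)·h(x₀)^{1/(N−1)} +
σ_{K,N−1}^{(t)}(|x₁−x₀|)·h(x₁)^{1/(N−1)}` for all `x₀, x₁ ∈ I`, `t ∈ [0,1]`.
The inequality is formulated in `ℝ≥0∞` so that an infinite coefficient forces the
corresponding density value to vanish. -/
def IsCDDensity (K N : ℝ) (I : Set ℝ) (h : ℝ → ℝ) : Prop :=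
  (∀ x ∈ I, 0 ≤ h x) ∧
  ∀ x₀ ∈ I, ∀ x₁ ∈ I, ∀ t ∈ Set.Icc (0:ℝ) 1,
    sigmaE K (N - 1) (1 - t) |x₁ - x₀| * ENNReal.ofReal (h x₀ ^ (1 / (N - 1)))
      + sigmaE K (N - 1) t |x₁ - x₀| * ENNReal.ofReal (h x₁ ^ (1 / (N - 1)))
      ≤ ENNReal.ofReal (h ((1 - t) * x₀ + t * x₁) ^ (1 / (N - 1)))


lemma core_contra (κ c z d C : ℝ) (hcz : c < z) (hzd : z < d) (D : Set ℝ) (u v : ℝ → ℝ)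
    (hD : ∀ᵐ s, s ∈ Set.Ioo c d → s ∈ D)
    (hub : ∀ s ∈ Set.Ioo c d, |u s| ≤ C) (hvb : ∀ s ∈ Set.Ioo c d, |v s| ≤ C)
    (hui : IntegrableOn u (Set.Ioo c d)) (hvi : IntegrableOn v (Set.Ioo c d))
    (hu2 : IntegrableOn (fun s => u s ^ 2) (Set.Ioo c d))
    (hv2 : IntegrableOn (fun s => v s ^ 2) (Set.Ioo c d))
    (hu : ∀ x ∈ Set.Ioo c d, ∀ y ∈ Set.Ioo c d, x ∈ D → y ∈ D → x < y →
      κ * (y - x) + ∫ s in x..y, u s ^ 2 ≤ u x - u y)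
    (hv : ∀ x ∈ Set.Ioo c d, ∀ y ∈ Set.Ioo c d, x < y →
      v x - v y = κ * (y - x) + ∫ s in x..y, v s ^ 2)
    (hL : ∀ x ∈ Set.Ioo c z, 0 < ∫ s in x..z, (v s - u s))
    (hR : ∀ y ∈ Set.Ioo z d, ∫ s in z..y, (v s - u s) ≤ 0) : False := by
  have hC0 : 0 ≤ C := (abs_nonneg _).trans (hub z ⟨hcz, hzd⟩)
  have sub : ∀ x ∈ Set.Ioo c d, ∀ y ∈ Set.Ioo c d, Set.uIoc x y ⊆ Set.Ioo c d := by
    intro x hx y hy s hs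
    rw [Set.mem_uIoc] at hs
    rcases hs with hs | hs
    · exact ⟨hx.1.trans hs.1, hs.2.trans_lt hy.2⟩
    · exact ⟨hy.1.trans hs.1, hs.2.trans_lt hx.2⟩
  have II : ∀ f : ℝ → ℝ, IntegrableOn f (Set.Ioo c d) → ∀ x ∈ Set.Ioo c d, ∀ y ∈ Set.Ioo c d,
      IntervalIntegrable f volume x y := by
    intro f hf x hx y hy
    rw [intervalIntegrable_iff]
    exact hf.mono_set (sub x hx y hy)
  obtain ⟨δ, hδ, hδc, hδd, hδM⟩ : ∃ δ > 0, δ < z - c ∧ δ < d - z ∧ (2 * C) * (2 * δ) ≤ 1 / 2 := by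
    have h1 : 0 < z - c := by linarith
    have h2 : 0 < d - z := by linarith
    have h3 : 0 < 1 / (8 * (C + 1)) := by positivity
    refine ⟨min (1 / (8 * (C + 1))) (min ((z - c) / 2) ((d - z) / 2)), by positivity, ?_, ?_, ?_⟩
    · exact ((min_le_right _ _).trans (min_le_left _ _)).trans_lt (by linarith)
    · exact ((min_le_right _ _).trans (min_le_right _ _)).trans_lt (by linarith)
    · have := min_le_left (1 / (8 * (C + 1))) (min ((z - c) / 2) ((d - z) / 2))
      have h5 : C * (1 / (8 * (C + 1))) ≤ 1 / 8 := by
        rw [mul_one_div, div_le_div_iff₀ (by positivity) (by positivity)]; linarith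
      nlinarith [mul_le_mul_of_nonneg_left this hC0]
  have hz : z ∈ Set.Ioo c d := ⟨hcz, hzd⟩
  obtain ⟨x, hx, hxD, hqx⟩ : ∃ x ∈ Set.Ioo (z - δ) z, x ∈ D ∧ u x - v x < 0 := by
    by_contra hcon
    push Not at hcon
    have h1 := hL (z - δ) ⟨by linarith, by linarith⟩
    have h2 : ∫ s in (z - δ)..z, (v s - u s) ≤ ∫ s in (z - δ)..z, (0 : ℝ) := by
      apply intervalIntegral.integral_mono_ae_restrict (by linarith)
      · exact II _ (hvi.sub hui) _ ⟨by linarith, by linarith⟩ _ hz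
      · simp
      · rw [Filter.EventuallyLE, ae_restrict_iff' measurableSet_Icc]
        have e1 : ∀ᵐ s : ℝ, s ≠ z := by simp [ae_iff]
        have e2 : ∀ᵐ s : ℝ, s ≠ z - δ := by simp [ae_iff]
        filter_upwards [hD, e1, e2] with s hs h1 h2 hs2
        have h3 : z - δ < s := lt_of_le_of_ne hs2.1 (Ne.symm h2)
        have h4 : s < z := lt_of_le_of_ne hs2.2 h1
        have := hcon s ⟨h3, h4⟩ (hs ⟨by linarith, by linarith⟩)
        linarith
    simp only [intervalIntegral.integral_zero] at h2
    linarith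
  obtain ⟨y, hy, hyD, hqy⟩ : ∃ y ∈ Set.Ioo z (z + δ), y ∈ D ∧ 0 ≤ u y - v y := by
    by_contra hcon
    push Not at hcon
    have h1 := hR (z + δ) ⟨by linarith, by linarith⟩
    have e1 : ∀ᵐ s : ℝ, s ≠ z + δ := by simp [ae_iff]
    have key : ∀ᵐ s : ℝ, s ∈ Set.Ioc z (z + δ) → 0 < v s - u s := by
      filter_upwards [hD, e1] with s hs h1 hs2
      have h4 : s < z + δ := lt_of_le_of_ne hs2.2 h1
      have := hcon s ⟨hs2.1, h4⟩ (hs ⟨by linarith [hs2.1], by linarith⟩)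
      linarith
    have h2 : 0 < ∫ s in z..(z + δ), (v s - u s) := by
      rw [intervalIntegral.integral_pos_iff_support_of_nonneg_ae']
      · refine ⟨by linarith, ?_⟩
        have : volume (Set.Ioc z (z + δ)) ≤
            volume (Function.support (fun s => v s - u s) ∩ Set.Ioc z (z + δ)) := by
          apply measure_mono_ae
          filter_upwards [key] with s hs hs2
          exact ⟨(hs hs2).ne', hs2⟩
        refine lt_of_lt_of_le ?_ this
        simp [hδ]
      · rw [Filter.EventuallyLE, ae_restrict_iff' measurableSet_uIoc,
          Set.uIoc_of_le (by linarith)]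
        filter_upwards [key] with s hs hs2
        exact (hs hs2).le
      · exact II _ (hvi.sub hui) _ hz _ ⟨by linarith, by linarith⟩
    linarith
  have hxI : x ∈ Set.Ioo c d := ⟨by linarith [hx.1], by linarith [hx.2]⟩
  have hyI : y ∈ Set.Ioo c d := ⟨by linarith [hy.1], by linarith [hy.2]⟩
  have hxy : x < y := hx.2.trans hy.1
  have hxyδ : y - x ≤ 2 * δ := by linarith [hx.1, hy.2]
  set q : ℝ → ℝ := fun s => u s - v s with hq
  let S : Set ℝ := (fun s => |q s|) '' (D ∩ Set.Icc x y)
  have hIcc : ∀ s ∈ Set.Icc x y, s ∈ Set.Ioo c d := fun s hs =>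
    ⟨hxI.1.trans_le hs.1, hs.2.trans_lt hyI.2⟩
  have hSb : BddAbove S := by
    refine ⟨2 * C, ?_⟩
    rintro _ ⟨s, ⟨_, hs⟩, rfl⟩
    have h1 := hub s (hIcc s hs)
    have h2 := hvb s (hIcc s hs)
    have := abs_sub (u s) (v s)
    simp only [hq]; linarith
  set B := sSup S with hB
  have hBle : ∀ s ∈ D, s ∈ Set.Icc x y → |q s| ≤ B := fun s hs hs2 =>
    le_csSup hSb ⟨s, ⟨hs, hs2⟩, rfl⟩
  have hB0 : 0 ≤ B := (abs_nonneg _).trans (hBle x hxD ⟨le_rfl, hxy.le⟩)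
  have step : ∀ s ∈ Set.Icc x y, ∀ t ∈ Set.Icc x y, s ∈ D → t ∈ D → s ≤ t →
      q t ≤ q s + B / 2 := by
    intro s hs t ht hsD htD hst
    rcases hst.eq_or_lt with rfl | hst
    · linarith
    have h1 := hu s (hIcc s hs) t (hIcc t ht) hsD htD hst
    have h2 := hv s (hIcc s hs) t (hIcc t ht) hst
    have h3 : ∫ r in s..t, (u r ^ 2 - v r ^ 2) = (∫ r in s..t, u r ^ 2) - ∫ r in s..t, v r ^ 2 :=
      intervalIntegral.integral_sub (II _ hu2 _ (hIcc s hs) _ (hIcc t ht))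
        (II _ hv2 _ (hIcc s hs) _ (hIcc t ht))
    have h4 : ‖∫ r in s..t, (u r ^ 2 - v r ^ 2)‖ ≤ (B * (2 * C)) * |t - s| := by
      apply intervalIntegral.norm_integral_le_of_norm_le_const_ae
      filter_upwards [hD] with r hr hr2
      rw [Set.uIoc_of_le hst.le] at hr2
      have hrI : r ∈ Set.Icc x y := ⟨hs.1.trans hr2.1.le, hr2.2.trans ht.2⟩
      have h5 := hBle r (hr (hIcc r hrI)) hrI
      have h6 : |u r + v r| ≤ 2 * C := by
        have := abs_add_le (u r) (v r)
        linarith [hub r (hIcc r hrI), hvb r (hIcc r hrI)]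
      rw [show u r ^ 2 - v r ^ 2 = q r * (u r + v r) by simp only [hq]; ring, Real.norm_eq_abs,
        abs_mul]
      exact mul_le_mul h5 h6 (abs_nonneg _) hB0
    rw [abs_of_pos (by linarith : 0 < t - s), Real.norm_eq_abs] at h4
    have h5 := (abs_le.1 h4).1
    have h6 : t - s ≤ 2 * δ := by linarith [hs.1, ht.2]
    have h7 : (B * (2 * C)) * (t - s) ≤ B / 2 := by
      calc (B * (2 * C)) * (t - s) ≤ (B * (2 * C)) * (2 * δ) := by gcongr
        _ = B * ((2 * C) * (2 * δ)) := by ring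
        _ ≤ B * (1 / 2) := by gcongr
        _ = B / 2 := by ring
    simp only [hq]; linarith
  have hBB : B ≤ B / 2 := by
    apply csSup_le
    · exact ⟨_, x, ⟨hxD, le_rfl, hxy.le⟩, rfl⟩
    rintro _ ⟨s, ⟨hsD, hs⟩, rfl⟩
    have h1 := step x ⟨le_rfl, hxy.le⟩ s hs hxD hsD hs.1
    have h2 := step s hs y ⟨hxy.le, le_rfl⟩ hsD hyD hs.2
    simp only [hq] at h1 h2 ⊢
    rw [abs_le]; constructor <;> linarith
  have h8 := hBle x hxD ⟨le_rfl, hxy.le⟩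
  have h9 := neg_abs_le (q x)
  have : |q x| = 0 := le_antisymm (by linarith) (abs_nonneg _)
  rw [abs_eq_zero] at this
  simp only [hq] at this
  linarith

lemma local_contra (n κ c z d : ℝ) (hn : 0 < n) (hcz : c < z) (hzd : z < d) (L : NNReal)
    (h g g' : ℝ → ℝ)
    (hlip : LipschitzOnWith L h (Set.Icc c d)) (hpos : ∀ s ∈ Set.Icc c d, 0 < h s)
    (hric : ∀ x ∈ Set.Ioo c d, ∀ y ∈ Set.Ioo c d,
      DifferentiableAt ℝ h x → DifferentiableAt ℝ h y → x < y →
      (n * κ) * (y - x) + (1 / n) * ∫ s in x..y, (deriv h s / h s) ^ 2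
        ≤ deriv h x / h x - deriv h y / h y)
    (hg : ∀ s, HasDerivAt g (g' s) s) (hg' : ∀ s, HasDerivAt g' (-κ * g s) s)
    (hgpos : ∀ s ∈ Set.Icc c d, 0 < g s)
    (hL : ∀ x ∈ Set.Ioo c z, Real.log (g x) - (1 / n) * Real.log (h x)
      < Real.log (g z) - (1 / n) * Real.log (h z))
    (hR : ∀ x ∈ Set.Ioo z d, Real.log (g x) - (1 / n) * Real.log (h x)
      ≤ Real.log (g z) - (1 / n) * Real.log (h z)) : False := by
  have hcd : c < d := hcz.trans hzd
  have hgc : Continuous g := continuous_iff_continuousAt.2 fun s => (hg s).continuousAt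
  have hgc' : Continuous g' := continuous_iff_continuousAt.2 fun s => (hg' s).continuousAt
  have hhc : ContinuousOn h (Set.Icc c d) := hlip.continuousOn
  obtain ⟨w, hw, hwm⟩ := isCompact_Icc.exists_isMinOn (Set.nonempty_Icc.2 hcd.le) hhc
  set m := h w with hm
  have hm0 : 0 < m := hpos w hw
  have hmle : ∀ s ∈ Set.Icc c d, m ≤ h s := fun s hs => hwm hs
  set u : ℝ → ℝ := fun s => (1 / n) * (deriv h s / h s) with hu
  set v : ℝ → ℝ := fun s => g' s / g s with hv
  have hvc : ContinuousOn v (Set.Icc c d) :=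
    hgc'.continuousOn.div hgc.continuousOn fun s hs => (hgpos s hs).ne'
  obtain ⟨C2, hC2⟩ := isCompact_Icc.exists_bound_of_continuousOn hvc
  have hsub : Set.Ioo c d ⊆ Set.Icc c d := Set.Ioo_subset_Icc_self
  have hub : ∀ s ∈ Set.Ioo c d, |u s| ≤ (1 / n) * (L / m) := by
    intro s hs
    have h1 : ‖deriv h s‖ ≤ L := norm_deriv_le_of_lipschitzOn (Icc_mem_nhds hs.1 hs.2) hlip
    rw [Real.norm_eq_abs] at h1
    have h2 := hmle s (hsub hs)
    simp only [hu]
    rw [abs_mul, abs_of_pos (by positivity : 0 < 1 / n), abs_div, abs_of_pos (hm0.trans_le h2)]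
    gcongr
  have hum : AEStronglyMeasurable u (volume.restrict (Set.Ioo c d)) := by
    have h1 : AEMeasurable h (volume.restrict (Set.Ioo c d)) :=
      (hhc.mono hsub).aemeasurable measurableSet_Ioo
    exact (((measurable_deriv h).aemeasurable.div h1).const_mul (1 / n)).aestronglyMeasurable
  have hint : ∀ f : ℝ → ℝ, AEStronglyMeasurable f (volume.restrict (Set.Ioo c d)) →
      ∀ C : ℝ, (∀ s ∈ Set.Ioo c d, |f s| ≤ C) → IntegrableOn f (Set.Ioo c d) := by
    intro f hf C hC
    refine IntegrableOn.of_bound (by simp) hf C ?_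
    rw [ae_restrict_iff' measurableSet_Ioo]
    exact Filter.Eventually.of_forall hC
  have hvm : AEStronglyMeasurable v (volume.restrict (Set.Ioo c d)) :=
    (hvc.mono hsub).aestronglyMeasurable measurableSet_Ioo
  have hvb : ∀ s ∈ Set.Ioo c d, |v s| ≤ C2 := fun s hs => hC2 s (hsub hs)
  have hui := hint u hum _ hub
  have hvi := hint v hvm _ hvb
  have hsq : ∀ (f : ℝ → ℝ) (C : ℝ), (∀ s ∈ Set.Ioo c d, |f s| ≤ C) →
      ∀ s ∈ Set.Ioo c d, |f s ^ 2| ≤ C ^ 2 := by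
    intro f C hC s hs
    rw [abs_pow]
    exact pow_le_pow_left₀ (abs_nonneg _) (hC s hs) 2
  have hu2 := hint (fun s => u s ^ 2) (hum.pow 2) _ (hsq u _ hub)
  have hv2 := hint (fun s => v s ^ 2) (hvm.pow 2) _ (hsq v _ hvb)
  have hae : ∀ᵐ s, s ∈ Set.Ioo c d → DifferentiableAt ℝ h s := by
    filter_upwards [hlip.ae_differentiableWithinAt_of_mem_real] with s hs hs2
    exact (hs (hsub hs2)).differentiableAt (Icc_mem_nhds hs2.1 hs2.2)
  have huI : ∀ x ∈ Set.Ioo c d, ∀ y ∈ Set.Ioo c d, Set.uIcc x y ⊆ Set.Ioo c d := by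
    intro x hx y hy s hs
    rw [Set.mem_uIcc] at hs
    rcases hs with hs | hs
    · exact ⟨hx.1.trans_le hs.1, hs.2.trans_lt hy.2⟩
    · exact ⟨hy.1.trans_le hs.1, hs.2.trans_lt hx.2⟩
  have II : ∀ f : ℝ → ℝ, IntegrableOn f (Set.Ioo c d) → ∀ x ∈ Set.Ioo c d, ∀ y ∈ Set.Ioo c d,
      IntervalIntegrable f volume x y := by
    intro f hf x hx y hy
    rw [intervalIntegrable_iff]
    exact hf.mono_set (Set.uIoc_subset_uIcc.trans (huI x hx y hy))
  have hloglip : LipschitzOnWith (Real.toNNReal (L / m)) (fun s => Real.log (h s))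
      (Set.Icc c d) := by
    have one : ∀ x ∈ Set.Icc c d, ∀ y ∈ Set.Icc c d,
        Real.log (h x) - Real.log (h y) ≤ L / m * |x - y| := by
      intro x hx y hy
      have hx0 := hpos x hx
      have hy0 := hpos y hy
      rw [← Real.log_div hx0.ne' hy0.ne']
      have h1 := Real.log_le_sub_one_of_pos (div_pos hx0 hy0)
      have h2 : h x / h y - 1 = (h x - h y) / h y := by field_simp
      have h3 : |h x - h y| ≤ L * |x - y| := by
        have := hlip.dist_le_mul x hx y hy
        simpa [Real.dist_eq] using this
      have h4 : (h x - h y) / h y ≤ (L * |x - y|) / m := by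
        have := hmle y hy
        have := le_abs_self (h x - h y)
        gcongr
        linarith
      calc _ ≤ _ := h1
        _ = _ := h2
        _ ≤ _ := h4
        _ = _ := by ring
    refine LipschitzOnWith.of_dist_le_mul fun x hx y hy => ?_
    rw [Real.dist_eq, Real.dist_eq, Real.coe_toNNReal _ (by positivity)]
    rw [abs_le]
    have h1 := one x hx y hy
    have h2 := one y hy x hx
    rw [abs_sub_comm y x] at h2
    constructor <;> linarith
  have ftcu : ∀ x ∈ Set.Ioo c d, ∀ y ∈ Set.Ioo c d,
      ∫ s in x..y, u s = (1 / n) * (Real.log (h y) - Real.log (h x)) := by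
    intro x hx y hy
    have hac : AbsolutelyContinuousOnInterval (fun s => Real.log (h s)) x y :=
      (hloglip.mono ((huI x hx y hy).trans hsub)).absolutelyContinuousOnInterval
    rw [← hac.integral_deriv_eq_sub]
    simp only [hu]
    rw [intervalIntegral.integral_const_mul]
    congr 1
    apply intervalIntegral.integral_congr_ae
    filter_upwards [hae] with s hs hs2
    have hs3 := huI x hx y hy (Set.uIoc_subset_uIcc hs2)
    exact ((hs hs3).hasDerivAt.log (hpos s (hsub hs3)).ne').deriv.symm
  have ftcv : ∀ x ∈ Set.Ioo c d, ∀ y ∈ Set.Ioo c d,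
      ∫ s in x..y, v s = Real.log (g y) - Real.log (g x) := by
    intro x hx y hy
    refine intervalIntegral.integral_eq_sub_of_hasDerivAt (f := fun s => Real.log (g s)) ?_
      (II v hvi x hx y hy)
    intro s hs
    exact (hg s).log (hgpos s (hsub (huI x hx y hy hs))).ne'
  have hvR : ∀ x ∈ Set.Ioo c d, ∀ y ∈ Set.Ioo c d, x < y →
      v x - v y = κ * (y - x) + ∫ s in x..y, v s ^ 2 := by
    intro x hx y hy hxy
    have h1 : ∫ s in x..y, (-κ - v s ^ 2) = v y - v x := by
      apply intervalIntegral.integral_eq_sub_of_hasDerivAt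
      · intro s hs
        have hgs := (hgpos s (hsub (huI x hx y hy hs))).ne'
        refine ((hg' s).div (hg s) hgs).congr_deriv ?_
        simp only [hv]
        field_simp
      · exact (intervalIntegrable_const).sub (II _ hv2 x hx y hy)
    rw [intervalIntegral.integral_sub intervalIntegrable_const (II _ hv2 x hx y hy),
      intervalIntegral.integral_const, smul_eq_mul] at h1
    linarith
  have hz : z ∈ Set.Ioo c d := ⟨hcz, hzd⟩
  refine core_contra κ c z d (max ((1 / n) * (L / m)) C2) hcz hzd {s | DifferentiableAt ℝ h s} u v
    hae (fun s hs => (hub s hs).trans (le_max_left _ _))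
    (fun s hs => (hvb s hs).trans (le_max_right _ _)) hui hvi hu2 hv2 ?_ hvR ?_ ?_
  · intro x hx y hy hxD hyD hxy
    have h1 := hric x hx y hy hxD hyD hxy
    have h2 : ∫ s in x..y, u s ^ 2 = (1 / n) ^ 2 * ∫ s in x..y, (deriv h s / h s) ^ 2 := by
      rw [← intervalIntegral.integral_const_mul]
      simp only [hu, mul_pow]
    rw [h2]
    simp only [hu]
    have h3 := mul_le_mul_of_nonneg_left h1 (by positivity : 0 ≤ 1 / n)
    have h4 : 1 / n * (n * κ * (y - x)) = κ * (y - x) := by field_simp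
    nlinarith
  · intro x hx
    have hx' : x ∈ Set.Ioo c d := ⟨hx.1, hx.2.trans hzd⟩
    rw [intervalIntegral.integral_sub (II _ hvi _ hx' _ hz) (II _ hui _ hx' _ hz),
      ftcu x hx' z hz, ftcv x hx' z hz]
    linarith [hL x hx]
  · intro y hy
    have hy' : y ∈ Set.Ioo c d := ⟨hcz.trans hy.1, hy.2⟩
    rw [intervalIntegral.integral_sub (II _ hvi _ hz _ hy') (II _ hui _ hz _ hy'),
      ftcu z hz y hy', ftcv z hz y hy']
    linarith [hR y hy]

lemma compare (K n a b : ℝ) (hn : 0 < n) (h g g' : ℝ → ℝ)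
    (hpos : ∀ x ∈ Set.Ioo a b, 0 < h x)
    (hlip : ∀ x ∈ Set.Ioo a b, ∃ r > (0:ℝ), Metric.ball x r ⊆ Set.Ioo a b ∧
      ∃ L : NNReal, LipschitzOnWith L h (Metric.ball x r))
    (hriccati : ∀ x ∈ Set.Ioo a b, ∀ y ∈ Set.Ioo a b,
      DifferentiableAt ℝ h x → DifferentiableAt ℝ h y → x < y →
      K * (y - x) + (1 / n) * ∫ s in x..y, (deriv h s / h s) ^ 2
        ≤ deriv h x / h x - deriv h y / h y)
    (hg : ∀ s, HasDerivAt g (g' s) s) (hg' : ∀ s, HasDerivAt g' (-(K / n) * g s) s)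
    (x₀ x₁ : ℝ) (h0 : x₀ ∈ Set.Ioo a b) (h1 : x₁ ∈ Set.Ioo a b)
    (hg0 : g x₀ ≤ h x₀ ^ (1 / n)) (hg1 : g x₁ ≤ h x₁ ^ (1 / n)) :
    ∀ s ∈ Set.Icc x₀ x₁, g s ≤ h s ^ (1 / n) := by
  intro w hw
  by_contra hcon
  push Not at hcon
  have hgc : Continuous g := continuous_iff_continuousAt.2 fun s => (hg s).continuousAt
  have hsub : Set.Icc x₀ x₁ ⊆ Set.Ioo a b := fun s hs =>
    ⟨h0.1.trans_le hs.1, hs.2.trans_lt h1.2⟩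
  have hhc : ContinuousOn h (Set.Icc x₀ x₁) := by
    intro s hs
    obtain ⟨r, hr, _, L, hL⟩ := hlip s (hsub hs)
    exact (hL.continuousOn.continuousAt (Metric.ball_mem_nhds s hr)).continuousWithinAt
  have hfpos : ∀ s ∈ Set.Ioo a b, 0 < h s ^ (1 / n) := fun s hs =>
    Real.rpow_pos_of_pos (hpos s hs) _
  set r : ℝ → ℝ := fun s => g s / h s ^ (1 / n) with hr
  have hrc : ContinuousOn r (Set.Icc x₀ x₁) := by
    refine hgc.continuousOn.div (hhc.rpow_const fun s hs => Or.inl (hpos s (hsub hs)).ne') ?_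
    exact fun s hs => (hfpos s (hsub hs)).ne'
  obtain ⟨z0, hz0, hz0m⟩ := isCompact_Icc.exists_isMaxOn ⟨w, hw⟩ hrc
  have hZ : IsCompact (Set.Icc x₀ x₁ ∩ r ⁻¹' {r z0}) :=
    isCompact_Icc.of_isClosed_subset
      (hrc.preimage_isClosed_of_isClosed isClosed_Icc isClosed_singleton) Set.inter_subset_left
  obtain ⟨z, ⟨hz, hzr⟩, hzl⟩ := hZ.exists_isLeast ⟨z0, hz0, rfl⟩
  have hzr : r z = r z0 := hzr
  have hmax : ∀ s ∈ Set.Icc x₀ x₁, r s ≤ r z := fun s hs => by rw [hzr]; exact hz0m hs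
  have hmaxl : ∀ s ∈ Set.Icc x₀ x₁, s < z → r s < r z := by
    intro s hs hsz
    refine lt_of_le_of_ne (hmax s hs) fun he => ?_
    exact absurd (hzl ⟨hs, by simp [he, hzr]⟩) (not_le.2 hsz)
  have hrz : 1 < r z := by
    refine lt_of_lt_of_le ?_ (hmax w hw)
    simp only [hr]
    rw [lt_div_iff₀ (hfpos w (hsub hw))]; linarith
  have hgz : 0 < g z := by
    simp only [hr] at hrz
    rw [lt_div_iff₀ (hfpos z (hsub hz))] at hrz
    linarith [hfpos z (hsub hz)]
  have hzx0 : x₀ < z := by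
    refine lt_of_le_of_ne hz.1 ?_
    rintro rfl
    simp only [hr] at hrz
    rw [lt_div_iff₀ (hfpos _ h0)] at hrz
    linarith
  have hzx1 : z < x₁ := by
    refine lt_of_le_of_ne hz.2 ?_
    rintro rfl
    simp only [hr] at hrz
    rw [lt_div_iff₀ (hfpos _ h1)] at hrz
    linarith
  obtain ⟨ρ, hρ, _, L, hL⟩ := hlip z (hsub hz)
  have hev : ∀ᶠ s in nhds z, 0 < g s ∧ s ∈ Metric.ball z ρ ∧ s ∈ Set.Icc x₀ x₁ := by
    filter_upwards [hgc.continuousAt.eventually (lt_mem_nhds hgz), Metric.ball_mem_nhds z hρ,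
      Icc_mem_nhds hzx0 hzx1] with s a1 a2 a3 using ⟨a1, a2, a3⟩
  obtain ⟨ε, hε, hεs⟩ := Metric.eventually_nhds_iff.1 hev
  have hI : ∀ s ∈ Set.Icc (z - ε / 2) (z + ε / 2),
      0 < g s ∧ s ∈ Metric.ball z ρ ∧ s ∈ Set.Icc x₀ x₁ := by
    intro s hs
    apply hεs
    rw [Real.dist_eq, abs_lt]
    constructor <;> linarith [hs.1, hs.2]
  have hlog : ∀ s ∈ Set.Icc (z - ε / 2) (z + ε / 2),
      Real.log (r s) = Real.log (g s) - (1 / n) * Real.log (h s) := by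
    intro s hs
    obtain ⟨b1, _, b3⟩ := hI s hs
    simp only [hr]
    rw [Real.log_div b1.ne' (hfpos s (hsub b3)).ne', Real.log_rpow (hpos s (hsub b3))]
  have hrpos : ∀ s ∈ Set.Icc (z - ε / 2) (z + ε / 2), 0 < r s := by
    intro s hs
    obtain ⟨b1, _, b3⟩ := hI s hs
    exact div_pos b1 (hfpos s (hsub b3))
  have hzI : z ∈ Set.Icc (z - ε / 2) (z + ε / 2) := ⟨by linarith, by linarith⟩
  refine local_contra n (K / n) (z - ε / 2) z (z + ε / 2) hn (by linarith) (by linarith) L h g g'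
    (hL.mono fun s hs => (hI s hs).2.1) (fun s hs => hpos s (hsub (hI s hs).2.2)) ?_ hg hg'
    (fun s hs => (hI s hs).1) ?_ ?_
  · intro x hx y hy hxD hyD hxy
    rw [mul_div_cancel₀ K hn.ne']
    exact hriccati x (hsub (hI x (Set.Ioo_subset_Icc_self hx)).2.2) y
      (hsub (hI y (Set.Ioo_subset_Icc_self hy)).2.2) hxD hyD hxy
  · intro x hx
    have hxI : x ∈ Set.Icc (z - ε / 2) (z + ε / 2) := ⟨hx.1.le, by linarith [hx.2]⟩
    rw [← hlog x hxI, ← hlog z hzI]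
    exact Real.log_lt_log (hrpos x hxI) (hmaxl x (hI x hxI).2.2 hx.2)
  · intro x hx
    have hxI : x ∈ Set.Icc (z - ε / 2) (z + ε / 2) := ⟨by linarith [hx.1], hx.2.le⟩
    rw [← hlog x hxI, ← hlog z hzI]
    exact Real.log_le_log (hrpos x hxI) (hmax x (hI x hxI).2.2)

lemma hasDeriv_sin_lin (k p c s : ℝ) :
    HasDerivAt (fun s => c * Real.sin (k * s + p)) (c * (Real.cos (k * s + p) * k)) s ∧
    HasDerivAt (fun s => c * (Real.cos (k * s + p) * k)) (-(k ^ 2) * (c * Real.sin (k * s + p))) s := by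
  have h1 : HasDerivAt (fun s => k * s + p) k s := by
    simpa using ((hasDerivAt_id s).const_mul k).add_const p
  refine ⟨h1.sin.const_mul c, ?_⟩
  refine ((h1.cos.mul_const k).const_mul c).congr_deriv ?_
  ring

lemma hasDeriv_sinh_lin (k p c s : ℝ) :
    HasDerivAt (fun s => c * Real.sinh (k * s + p)) (c * (Real.cosh (k * s + p) * k)) s ∧
    HasDerivAt (fun s => c * (Real.cosh (k * s + p) * k)) ((k ^ 2) * (c * Real.sinh (k * s + p))) s := by
  have h1 : HasDerivAt (fun s => k * s + p) k s := by
    simpa using ((hasDerivAt_id s).const_mul k).add_const p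
  refine ⟨h1.sinh.const_mul c, ?_⟩
  refine ((h1.cosh.mul_const k).const_mul c).congr_deriv ?_
  ring

/-- Everything the final argument needs about the comparison principle. -/
lemma main_real (K n a b : ℝ) (hn : 0 < n) (f : ℝ → ℝ) (hf : ∀ x ∈ Set.Ioo a b, 0 < f x)
    (hcmp : ∀ g g' : ℝ → ℝ, (∀ s, HasDerivAt g (g' s) s) →
      (∀ s, HasDerivAt g' (-(K / n) * g s) s) → ∀ x₀ ∈ Set.Ioo a b, ∀ x₁ ∈ Set.Ioo a b,
      g x₀ ≤ f x₀ → g x₁ ≤ f x₁ → ∀ s ∈ Set.Icc x₀ x₁, g s ≤ f s)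
    (x₀ x₁ : ℝ) (h0 : x₀ ∈ Set.Ioo a b) (h1 : x₁ ∈ Set.Ioo a b) (hlt : x₀ < x₁)
    (t : ℝ) (ht : t ∈ Set.Icc (0:ℝ) 1) :
    ¬ (n * Real.pi ^ 2 ≤ K * (x₁ - x₀) ^ 2) ∧ 0 ≤ sigmaR K n (1 - t) (x₁ - x₀) ∧
    0 ≤ sigmaR K n t (x₁ - x₀) ∧
    sigmaR K n (1 - t) (x₁ - x₀) * f x₀ + sigmaR K n t (x₁ - x₀) * f x₁
      ≤ f ((1 - t) * x₀ + t * x₁) := by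
  have hθ : 0 < x₁ - x₀ := by linarith
  obtain ⟨ht0, ht1⟩ := ht
  have hxt : (1 - t) * x₀ + t * x₁ ∈ Set.Icc x₀ x₁ := by constructor <;> nlinarith
  have hnot : ¬ (n * Real.pi ^ 2 ≤ K * (x₁ - x₀) ^ 2) := by
    intro hle
    have hK : 0 < K := by
      have : 0 < K * (x₁ - x₀) ^ 2 := lt_of_lt_of_le (by positivity) hle
      exact pos_of_mul_pos_left this (by positivity)
    set k := Real.sqrt (K / n) with hk
    have hkpos : 0 < k := Real.sqrt_pos.2 (by positivity)
    have hk2 : k ^ 2 = K / n := Real.sq_sqrt (by positivity)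
    have hπ : Real.pi ≤ k * (x₁ - x₀) := by
      apply le_of_sq_le_sq _ (by positivity)
      rw [mul_pow, hk2, div_mul_eq_mul_div, le_div_iff₀ hn]; linarith
    have hx2 : x₀ + Real.pi / k ∈ Set.Ioo a b := by
      have hp : 0 < Real.pi / k := by positivity
      have : Real.pi / k ≤ x₁ - x₀ := by rw [div_le_iff₀ hkpos]; linarith
      exact ⟨by linarith [h0.1], by linarith [h1.2]⟩
    have hmid : x₀ + Real.pi / (2 * k) ∈ Set.Icc x₀ (x₀ + Real.pi / k) := by
      have hp : 0 < Real.pi / k := by positivity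
      have : Real.pi / (2 * k) = (Real.pi / k) / 2 := by field_simp
      rw [this]
      constructor <;> linarith
    set M := f (x₀ + Real.pi / (2 * k)) with hM
    have := hcmp (fun s => (M + 1) * Real.sin (k * s + (-(k * x₀)))) _
      (fun s => (hasDeriv_sin_lin k (-(k * x₀)) (M + 1) s).1)
      (fun s => by rw [← hk2]; exact (hasDeriv_sin_lin k (-(k * x₀)) (M + 1) s).2)
      x₀ h0 _ hx2 (by simp [(hf x₀ h0).le])
      (by
        have : k * (x₀ + Real.pi / k) + -(k * x₀) = Real.pi := by field_simp; ring
        simp only [this, Real.sin_pi, mul_zero]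
        exact (hf _ hx2).le) _ hmid
    have e : k * (x₀ + Real.pi / (2 * k)) + -(k * x₀) = Real.pi / 2 := by field_simp; ring
    simp only [e, Real.sin_pi_div_two] at this
    linarith
  refine ⟨hnot, ?_⟩
  have hθ2 : 0 < (x₁ - x₀) ^ 2 := by positivity
  rcases lt_trichotomy K 0 with hK | hK | hK
  · have c1 : ¬ (0 < K * (x₁ - x₀) ^ 2) := by nlinarith
    have c2 : ¬ (K * (x₁ - x₀) ^ 2 = 0 ∨ n = 0) := by
      rintro (h | h)
      · nlinarith
      · linarith
    have hpos' : 0 < -K / n := div_pos (by linarith) hn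
    simp only [sigmaR, if_neg c1, if_neg c2]
    set k := Real.sqrt (-K / n) with hk
    have hkpos : 0 < k := Real.sqrt_pos.2 hpos'
    have hk2 : k ^ 2 = -(K / n) := by rw [hk, Real.sq_sqrt hpos'.le]; ring
    have hS : 0 < Real.sinh ((x₁ - x₀) * k) := Real.sinh_pos_iff.2 (by positivity)
    refine ⟨div_nonneg (Real.sinh_nonneg_iff.2 ?_) hS.le,
      div_nonneg (Real.sinh_nonneg_iff.2 (by positivity)) hS.le, ?_⟩
    · have : 0 ≤ 1 - t := by linarith
      positivity
    set S := Real.sinh ((x₁ - x₀) * k) with hSd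
    have := hcmp (fun s => f x₀ / S * Real.sinh ((-k) * s + k * x₁)
        + f x₁ / S * Real.sinh (k * s + (-(k * x₀)))) _
      (fun s => (hasDeriv_sinh_lin (-k) (k * x₁) (f x₀ / S) s).1.add
        (hasDeriv_sinh_lin k (-(k * x₀)) (f x₁ / S) s).1)
      (fun s => by
        refine ((hasDeriv_sinh_lin (-k) (k * x₁) (f x₀ / S) s).2.add
          (hasDeriv_sinh_lin k (-(k * x₀)) (f x₁ / S) s).2).congr_deriv ?_
        rw [← hk2]; ring) x₀ h0 x₁ h1
      (by
        have e1 : -k * x₀ + k * x₁ = (x₁ - x₀) * k := by ring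
        have e2 : k * x₀ + -(k * x₀) = 0 := by ring
        simp only [e1, e2, ← hSd, Real.sinh_zero]
        rw [div_mul_cancel₀ _ hS.ne']; simp)
      (by
        have e1 : -k * x₁ + k * x₁ = 0 := by ring
        have e2 : k * x₁ + -(k * x₀) = (x₁ - x₀) * k := by ring
        simp only [e1, e2, ← hSd, Real.sinh_zero]
        rw [div_mul_cancel₀ _ hS.ne']; simp) _ hxt
    have e1 : -k * ((1 - t) * x₀ + t * x₁) + k * x₁ = (1 - t) * (x₁ - x₀) * k := by ring
    have e2 : k * ((1 - t) * x₀ + t * x₁) + -(k * x₀) = t * (x₁ - x₀) * k := by ring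
    simp only [e1, e2] at this
    refine le_trans (le_of_eq ?_) this
    ring
  · subst hK
    simp only [sigmaR, zero_mul, lt_irrefl, if_false, true_or, if_true]
    refine ⟨by linarith, ht0, ?_⟩
    set m := (f x₁ - f x₀) / (x₁ - x₀) with hm
    have hmm : m * (x₁ - x₀) = f x₁ - f x₀ := div_mul_cancel₀ _ hθ.ne'
    have := hcmp (fun s => m * s + (f x₀ - m * x₀)) (fun _ => m)
      (fun s => by simpa using ((hasDerivAt_id s).const_mul m).add_const (f x₀ - m * x₀))
      (fun s => by simpa using hasDerivAt_const s m) x₀ h0 x₁ h1 (by simp)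
      (by linarith) _ hxt
    nlinarith
  · have c1 : 0 < K * (x₁ - x₀) ^ 2 := by positivity
    have hpos' : 0 < K / n := div_pos hK hn
    simp only [sigmaR, if_pos c1]
    set k := Real.sqrt (K / n) with hk
    have hkpos : 0 < k := Real.sqrt_pos.2 hpos'
    have hk2 : k ^ 2 = K / n := Real.sq_sqrt hpos'.le
    have hπ : (x₁ - x₀) * k < Real.pi := by
      apply lt_of_pow_lt_pow_left₀ 2 Real.pi_pos.le
      rw [mul_pow, hk2, ← mul_div_assoc, div_lt_iff₀ hn]
      push Not at hnot
      linarith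
    have hθk : 0 < (x₁ - x₀) * k := by positivity
    have hS : 0 < Real.sin ((x₁ - x₀) * k) := Real.sin_pos_of_pos_of_lt_pi hθk hπ
    refine ⟨div_nonneg (Real.sin_nonneg_of_nonneg_of_le_pi ?_ ?_) hS.le,
      div_nonneg (Real.sin_nonneg_of_nonneg_of_le_pi (by positivity) ?_) hS.le, ?_⟩
    · have : 0 ≤ 1 - t := by linarith
      positivity
    · rw [mul_assoc]; nlinarith
    · rw [mul_assoc]; nlinarith
    set S := Real.sin ((x₁ - x₀) * k) with hSd
    have := hcmp (fun s => f x₀ / S * Real.sin ((-k) * s + k * x₁)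
        + f x₁ / S * Real.sin (k * s + (-(k * x₀)))) _
      (fun s => (hasDeriv_sin_lin (-k) (k * x₁) (f x₀ / S) s).1.add
        (hasDeriv_sin_lin k (-(k * x₀)) (f x₁ / S) s).1)
      (fun s => by
        refine ((hasDeriv_sin_lin (-k) (k * x₁) (f x₀ / S) s).2.add
          (hasDeriv_sin_lin k (-(k * x₀)) (f x₁ / S) s).2).congr_deriv ?_
        rw [← hk2]; ring) x₀ h0 x₁ h1
      (by
        have e1 : -k * x₀ + k * x₁ = (x₁ - x₀) * k := by ring
        have e2 : k * x₀ + -(k * x₀) = 0 := by ring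
        simp only [e1, e2, ← hSd, Real.sin_zero]
        rw [div_mul_cancel₀ _ hS.ne']; simp)
      (by
        have e1 : -k * x₁ + k * x₁ = 0 := by ring
        have e2 : k * x₁ + -(k * x₀) = (x₁ - x₀) * k := by ring
        simp only [e1, e2, ← hSd, Real.sin_zero]
        rw [div_mul_cancel₀ _ hS.ne']; simp) _ hxt
    have e1 : -k * ((1 - t) * x₀ + t * x₁) + k * x₁ = (1 - t) * (x₁ - x₀) * k := by ring
    have e2 : k * ((1 - t) * x₀ + t * x₁) + -(k * x₀) = t * (x₁ - x₀) * k := by ring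
    simp only [e1, e2] at this
    refine le_trans (le_of_eq ?_) this
    ring

theorem integrated_riccati_implies_cd_density (K N : ℝ) (hN : 1 < N) (a b : ℝ)
    (h : ℝ → ℝ) (hpos : ∀ x ∈ Set.Ioo a b, 0 < h x)
    (hlip : ∀ x ∈ Set.Ioo a b, ∃ r > (0:ℝ), Metric.ball x r ⊆ Set.Ioo a b ∧
      ∃ L : NNReal, LipschitzOnWith L h (Metric.ball x r))
    (hriccati : ∀ x ∈ Set.Ioo a b, ∀ y ∈ Set.Ioo a b,
      DifferentiableAt ℝ h x → DifferentiableAt ℝ h y → x < y →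
      K * (y - x) + (1 / (N - 1)) * ∫ s in x..y, (deriv h s / h s) ^ 2
        ≤ deriv h x / h x - deriv h y / h y) :
    IsCDDensity K N (Set.Ioo a b) h := by
  have hn : 0 < N - 1 := by linarith
  refine ⟨fun x hx => (hpos x hx).le, ?_⟩
  have hf : ∀ x ∈ Set.Ioo a b, 0 < h x ^ (1 / (N - 1)) := fun x hx =>
    Real.rpow_pos_of_pos (hpos x hx) _
  have main : ∀ x₀ ∈ Set.Ioo a b, ∀ x₁ ∈ Set.Ioo a b, ∀ t ∈ Set.Icc (0:ℝ) 1, x₀ < x₁ →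
      sigmaE K (N - 1) (1 - t) |x₁ - x₀| * ENNReal.ofReal (h x₀ ^ (1 / (N - 1)))
      + sigmaE K (N - 1) t |x₁ - x₀| * ENNReal.ofReal (h x₁ ^ (1 / (N - 1)))
      ≤ ENNReal.ofReal (h ((1 - t) * x₀ + t * x₁) ^ (1 / (N - 1))) := by
    intro x₀ h0 x₁ h1 t ht hlt
    obtain ⟨r1, r2, r3, r4⟩ := main_real K (N - 1) a b hn (fun x => h x ^ (1 / (N - 1))) hf
      (fun g g' hg hg' y₀ hy0 y₁ hy1 hl hr =>
        compare K (N - 1) a b hn h g g' hpos hlip hriccati hg hg' y₀ y₁ hy0 hy1 hl hr)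
      x₀ x₁ h0 h1 hlt t ht
    rw [abs_of_pos (by linarith : 0 < x₁ - x₀)]
    simp only [sigmaE, if_neg r1]
    rw [← ENNReal.ofReal_mul r2, ← ENNReal.ofReal_mul r3,
      ← ENNReal.ofReal_add (mul_nonneg r2 (hf _ h0).le) (mul_nonneg r3 (hf _ h1).le)]
    exact ENNReal.ofReal_le_ofReal r4
  intro x₀ h0 x₁ h1 t ht
  rcases lt_trichotomy x₀ x₁ with hlt | rfl | hlt
  · exact main x₀ h0 x₁ h1 t ht hlt
  · have c1 : ¬ ((N - 1) * Real.pi ^ 2 ≤ 0) := by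
      have : 0 < (N - 1) * Real.pi ^ 2 := by positivity
      linarith
    have e : (1 - t) * x₀ + t * x₀ = x₀ := by ring
    simp only [sigmaE, sigmaR, sub_self, abs_zero, ne_eq, OfNat.ofNat_ne_zero, not_false_eq_true,
      zero_pow, mul_zero, if_neg c1, lt_irrefl, if_false, true_or, if_true, e]
    rw [← add_mul, ← ENNReal.ofReal_add (by linarith [ht.2]) ht.1]
    simp
  · have := main x₁ h1 x₀ h0 (1 - t) ⟨by linarith [ht.2], by linarith [ht.1]⟩ hlt
    rw [_root_.sub_sub_cancel, abs_sub_comm, add_comm] at this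
    rwa [add_comm (t * x₁)] at this
end

section
/- For every N ∈ (1,∞), the function t ↦ |1 + (N−1)·t·(cos t / sin t)|·(sin t)^{N−1} is Lebesgue integrable on the interval (0, π); in particular, for every ε ∈ (0,π), ∫_{π−ε}^{π} |1 + (N−1)·t·cot t|·(sin t)^{N−1} dt < ∞. -/
open MeasureTheory Real

theorem aux_deriv (N t : ℝ) (ht : 0 < sin t) :
    HasDerivAt (fun t => sin t ^ (N - 1)) ((N - 1) * (cos t / sin t) * sin t ^ (N - 1)) t := by
  have h := (hasDerivAt_sin t).rpow_const (p := N - 1) (Or.inl ht.ne')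
  convert h using 1
  rw [Real.rpow_sub_one ht.ne' (N - 1)]
  field_simp

theorem aux_cont (N : ℝ) (hN : 1 < N) : Continuous (fun t => sin t ^ (N - 1)) :=
  continuous_sin.rpow_const (fun _ => Or.inr (by linarith))

theorem aux_int (N : ℝ) (hN : 1 < N) :
    IntegrableOn (fun t => (N - 1) * (cos t / sin t) * sin t ^ (N - 1)) (Set.Ioc 0 π) volume := by
  have hpi := Real.pi_pos
  have h1 : IntegrableOn (fun t => (N - 1) * (cos t / sin t) * sin t ^ (N - 1))
      (Set.Ioc 0 (π / 2)) volume := by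
    refine intervalIntegral.integrableOn_deriv_of_nonneg (aux_cont N hN).continuousOn
      (fun x hx => aux_deriv N x (sin_pos_of_pos_of_lt_pi hx.1 (by linarith [hx.2]))) ?_
    intro x hx
    have hs := sin_pos_of_pos_of_lt_pi hx.1 (by linarith [hx.2])
    have hc : 0 ≤ cos x := cos_nonneg_of_neg_pi_div_two_le_of_le (by linarith [hx.1]) hx.2.le
    have : 0 ≤ N - 1 := by linarith
    positivity
  have h2 : IntegrableOn (fun t => -((N - 1) * (cos t / sin t) * sin t ^ (N - 1)))
      (Set.Ioc (π / 2) π) volume := by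
    refine intervalIntegral.integrableOn_deriv_of_nonneg (aux_cont N hN).neg.continuousOn
      (fun x hx => (aux_deriv N x (sin_pos_of_pos_of_lt_pi (by linarith [hx.1]) hx.2)).neg) ?_
    intro x hx
    have hs := sin_pos_of_pos_of_lt_pi (by linarith [hx.1]) hx.2
    have hc : 0 ≤ -cos x := by
      linarith [cos_nonpos_of_pi_div_two_le_of_le hx.1.le (by linarith [hx.2])]
    have : 0 ≤ N - 1 := by linarith
    have h : 0 ≤ (N - 1) * (-cos x / sin x) * sin x ^ (N - 1) := by positivity
    rw [neg_div] at h
    linarith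
  rw [← Set.Ioc_union_Ioc_eq_Ioc (show (0:ℝ) ≤ π / 2 by linarith) (show π / 2 ≤ π by linarith)]
  refine h1.union ?_
  have h3 := h2.neg
  refine h3.congr_fun (fun x _ => ?_) measurableSet_Ioc
  simp

theorem integrable_sine_cotangent (N : ℝ) (hN : 1 < N) :
    IntegrableOn
      (fun t => |1 + (N - 1) * t * (Real.cos t / Real.sin t)| * Real.sin t ^ (N - 1))
      (Set.Ioo 0 Real.pi) volume ∧
    ∀ ε : ℝ, 0 < ε → ε < Real.pi →
      IntegrableOn
        (fun t => |1 + (N - 1) * t * (Real.cos t / Real.sin t)| * Real.sin t ^ (N - 1))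
        (Set.Ioo (Real.pi - ε) Real.pi) volume := by
  have key : IntegrableOn
      (fun t => |1 + (N - 1) * t * (Real.cos t / Real.sin t)| * Real.sin t ^ (N - 1))
      (Set.Ioo 0 Real.pi) volume := by
    have hi : IntegrableOn (fun t => (N - 1) * (cos t / sin t) * sin t ^ (N - 1))
        (Set.Icc 0 π) volume := by
      rw [integrableOn_Icc_iff_integrableOn_Ioc]
      exact aux_int N hN
    have h1 := hi.continuousOn_mul (continuousOn_id (s := Set.Icc (0:ℝ) π)) isCompact_Icc
    have h2 : IntegrableOn (fun t => sin t ^ (N - 1)) (Set.Icc 0 π) volume :=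
      (aux_cont N hN).continuousOn.integrableOn_Icc
    have h3 : IntegrableOn (fun t => |sin t ^ (N - 1) +
        t * ((N - 1) * (cos t / sin t) * sin t ^ (N - 1))|) (Set.Icc 0 π) volume :=
      (h2.add h1).abs
    refine (h3.mono_set Set.Ioo_subset_Icc_self).congr_fun (fun x hx => ?_) measurableSet_Ioo
    have hs := sin_pos_of_pos_of_lt_pi hx.1 hx.2
    have hp : 0 < sin x ^ (N - 1) := by positivity
    dsimp only
    nth_rewrite 3 [← abs_of_pos hp]
    rw [← abs_mul]
    congr 1
    ring
  refine ⟨key, fun ε h0 h1 => key.mono_set (Set.Ioo_subset_Ioo_left (by linarith))⟩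
end
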